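/- Let p > N ≥ 2 and let γ₀ = 2^{N-p}·(2^{(p-N)/(p-1)} − 1)^{p-1}. Then for every open set Ω ⊆ ℝ^N and every 0 ≤ γ < γ₀, the capacitary inradius coincides with the classical inradius: R_{p,γ}(Ω) = r_Ω. -/

import Mathlib

open MeasureTheory Filter
open scoped ENNReal

noncomputable section

/-- Relative `p`-capacity of a compact set `K` inside an open set `E`:
infimum of the `p`-Dirichlet energy over smooth compactly supported functions
in `E` which are at least `1` on `K`. -/
noncomputable def pCapacity {N : ℕ} (p : ℝ) (K E : Set (EuclideanSpace ℝ (Fin N))) : ℝ :=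
  sInf {c : ℝ | ∃ φ : EuclideanSpace ℝ (Fin N) → ℝ, ContDiff ℝ (⊤ : ℕ∞) φ ∧ HasCompactSupport φ ∧
    tsupport φ ⊆ E ∧ (∀ x ∈ K, 1 ≤ φ x) ∧ c = ∫ x, ‖fderiv ℝ φ x‖ ^ p}

/-- `closedBall x₀ r \ Ω` is `(p,γ)`-negligible. -/
def IsNegligible {N : ℕ} (p γ : ℝ) (Ω : Set (EuclideanSpace ℝ (Fin N)))
    (x₀ : EuclideanSpace ℝ (Fin N)) (r : ℝ) : Prop :=
  pCapacity p (Metric.closedBall x₀ r \ Ω) (Metric.ball x₀ (2*r)) ≤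
    γ * pCapacity p (Metric.closedBall x₀ r) (Metric.ball x₀ (2*r))

/-- The `(p,γ)`-capacitary inradius of an open set, as an extended nonnegative real. -/
noncomputable def capInradius {N : ℕ} (p γ : ℝ) (Ω : Set (EuclideanSpace ℝ (Fin N))) : ℝ≥0∞ :=
  sSup {ρ : ℝ≥0∞ | ∃ r : ℝ, 0 < r ∧ ρ = ENNReal.ofReal r ∧
    ∃ x₀ : EuclideanSpace ℝ (Fin N), IsNegligible p γ Ω x₀ r}

/-- The classical inradius, as an extended nonnegative real. -/
noncomputable def eInradius {N : ℕ} (Ω : Set (EuclideanSpace ℝ (Fin N))) : ℝ≥0∞ :=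
  sSup {ρ : ℝ≥0∞ | ∃ r : ℝ, 0 < r ∧ ρ = ENNReal.ofReal r ∧
    ∃ x₀ : EuclideanSpace ℝ (Fin N), Metric.ball x₀ r ⊆ Ω}

/-!
Integrating along rays and applying Hölder's inequality to the potential
`∫ ‖∇φ(z)‖ ‖z - x‖ ^ (1 - N) dz` bounds `|φ x|` by the energy of `φ`. Among balls of given radius
the dual norm of the kernel is largest on the one centred at `x`, so every nonempty subset of
`closedBall x₀ r` has capacity in `ball x₀ (2 * r)` at least that of the centre, wherever its points
lie. Radial test functions bound the capacity of `closedBall x₀ r` from above by its explicit value.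
The quotient of the two is `γ₀` by homogeneity, so for `γ < γ₀` the set `closedBall x₀ r \ Ω` can be
negligible only if it is empty.
-/

section

open Set Metric Measure Module

/-! ### Integration over spheres and balls -/

section RadialIntegration

lemma setLIntegral_le_setLIntegral_of_threshold {X : Type*} [MeasurableSpace X] {μ : Measure X}
    {f : X → ℝ≥0∞} {A B : Set X} {c : ℝ≥0∞} (hA : MeasurableSet A) (hB : MeasurableSet B)
    (hcB : ∀ z ∈ B, c ≤ f z) (hAc : ∀ z ∈ A \ B, f z ≤ c) (hAB : μ A ≤ μ B)
    (hfin : μ (A ∩ B) ≠ ∞) :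
    ∫⁻ z in A, f z ∂μ ≤ ∫⁻ z in B, f z ∂μ := by
  have hdiff : μ (A \ B) ≤ μ (B \ A) := by
    rw [← measure_inter_add_sdiff A hB, ← measure_inter_add_sdiff B hA, inter_comm B A] at hAB
    exact (ENNReal.add_le_add_iff_left hfin).1 hAB
  have houter : ∫⁻ z in A \ B, f z ∂μ ≤ ∫⁻ z in B \ A, f z ∂μ :=
    calc ∫⁻ z in A \ B, f z ∂μ ≤ ∫⁻ _ in A \ B, c ∂μ := setLIntegral_mono measurable_const hAc
      _ ≤ ∫⁻ _ in B \ A, c ∂μ := by simpa only [setLIntegral_const] using mul_le_mul_right hdiff c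
      _ ≤ ∫⁻ z in B \ A, f z ∂μ := setLIntegral_mono' (hB.diff hA) fun z hz ↦ hcB z hz.1
  rw [← lintegral_inter_add_sdiff f A hB, ← lintegral_inter_add_sdiff f B hA, inter_comm B A]
  exact add_le_add_right houter _

variable {E : Type*} [NormedAddCommGroup E] [NormedSpace ℝ E] [FiniteDimensional ℝ E]
  [MeasurableSpace E] [BorelSpace E] (μ : Measure E) [μ.IsAddHaarMeasure]

lemma setLIntegral_ball_le_setLIntegral_ball_of_antitone {k : ℝ≥0∞ → ℝ≥0∞} (hk : Antitone k)
    (x y : E) (R : ℝ) :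
    ∫⁻ z in ball y R, k ‖z - x‖ₑ ∂μ ≤ ∫⁻ z in ball x R, k ‖z - x‖ₑ ∂μ := by
  refine setLIntegral_le_setLIntegral_of_threshold (c := k (ENNReal.ofReal R)) measurableSet_ball
    measurableSet_ball (fun z hz ↦ hk ?_) (fun z hz ↦ hk ?_)
    (by simp only [addHaar_ball_center, le_refl])
    (measure_ne_top_of_subset inter_subset_left measure_ball_lt_top.ne)
  · rw [← ofReal_norm, ← dist_eq_norm]
    exact ENNReal.ofReal_le_ofReal (mem_ball.1 hz).le
  · rw [← ofReal_norm, ← dist_eq_norm]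
    exact ENNReal.ofReal_le_ofReal (not_lt.1 hz.2)

variable [Nontrivial E]

lemma lintegral_eq_lintegral_toSphere_lintegral_Ioi {f : E → ℝ≥0∞} (hf : Measurable f) (x : E) :
    ∫⁻ z, f z ∂μ = ∫⁻ θ : sphere (0 : E) 1, (∫⁻ s in Ioi (0 : ℝ),
      ENNReal.ofReal (s ^ (finrank ℝ E - 1)) * f (x + s • (θ : E))) ∂μ.toSphere := by
  have hfx : Measurable fun z ↦ f (x + z) := by fun_prop
  calc ∫⁻ z, f z ∂μ = ∫⁻ z, f (x + z) ∂μ := (lintegral_add_left_eq_self f x).symm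
    _ = ∫⁻ z : ({0}ᶜ : Set E), f (x + z) ∂(μ.comap (↑)) := by
        rw [lintegral_subtype_comap (measurableSet_singleton _).compl fun z ↦ f (x + z),
          restrict_compl_singleton]
    _ = ∫⁻ u : sphere (0 : E) 1 × Ioi (0 : ℝ), f (x + u.2.1 • u.1.1)
          ∂μ.toSphere.prod (.volumeIoiPow (finrank ℝ E - 1)) := by
        rw [← μ.measurePreserving_homeomorphUnitSphereProd.lintegral_comp_emb
          (Homeomorph.measurableEmbedding _)]
        refine lintegral_congr fun z ↦ ?_
        rw [← homeomorphUnitSphereProd_symm_apply_coe, Homeomorph.symm_apply_apply]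
    _ = ∫⁻ θ, (∫⁻ s, f (x + s.1 • θ.1) ∂(.volumeIoiPow (finrank ℝ E - 1))) ∂μ.toSphere :=
        lintegral_prod _ (by fun_prop)
    _ = _ := by
        refine lintegral_congr fun θ ↦ ?_
        rw [volumeIoiPow, lintegral_withDensity_eq_lintegral_mul _ (by fun_prop) (by fun_prop),
          ← lintegral_subtype_comap measurableSet_Ioi]
        rfl

lemma lintegral_fun_norm_sub {f : ℝ → ℝ≥0∞} (hf : Measurable f) (x : E) :
    ∫⁻ z, f ‖z - x‖ ∂μ = μ.toSphere univ *
      ∫⁻ s in Ioi (0 : ℝ), ENNReal.ofReal (s ^ (finrank ℝ E - 1)) * f s := by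
  rw [lintegral_eq_lintegral_toSphere_lintegral_Ioi μ (by fun_prop) x, mul_comm, ← lintegral_const]
  refine lintegral_congr fun θ ↦ setLIntegral_congr_fun measurableSet_Ioi fun s hs ↦ ?_
  simp [norm_smul, abs_of_pos (mem_Ioi.1 hs)]

end RadialIntegration

/-! ### Pointwise bounds by the energy -/

/-- The resistance of the shell `r < ‖x‖ < R` for the radial `p`-Laplacian in dimension `d`: the
integral of `s ^ (-(d - 1) / (p - 1))`, which is up to sign the derivative of a radial
`p`-harmonic function. -/
def shellResistance (d p r R : ℝ) : ℝ := ∫ s in r..R, s ^ (-((d - 1) / (p - 1)))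

section ShellResistance

variable {d p : ℝ}

lemma neg_one_lt_neg_sub_div (hp : 1 < p) (hdp : d < p) : -1 < -((d - 1) / (p - 1)) := by
  rw [neg_lt_neg_iff, div_lt_one (by linarith)]
  linarith

lemma shellResistance_eq (hp : 1 < p) (hdp : d < p) (r R : ℝ) :
    shellResistance d p r R =
      (R ^ ((p - d) / (p - 1)) - r ^ ((p - d) / (p - 1))) / ((p - d) / (p - 1)) := by
  have hexp : -((d - 1) / (p - 1)) + 1 = (p - d) / (p - 1) := by
    have : p - 1 ≠ 0 := by linarith
    field_simp
    ring
  rw [shellResistance, integral_rpow (Or.inl (neg_one_lt_neg_sub_div hp hdp)), hexp]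

lemma shellResistance_pos (hp : 1 < p) (hdp : d < p) {r R : ℝ} (hr : 0 ≤ r) (hrR : r < R) :
    0 < shellResistance d p r R := by
  have hκ : 0 < (p - d) / (p - 1) := div_pos (by linarith) (by linarith)
  rw [shellResistance_eq hp hdp]
  exact div_pos (sub_pos.2 (Real.rpow_lt_rpow hr hrR hκ)) hκ

end ShellResistance

section PotentialEstimate

variable {E F : Type*} [NormedAddCommGroup E] [NormedSpace ℝ E]
  [NormedAddCommGroup F] [NormedSpace ℝ F] {φ : E → F} {p : ℝ}

lemma enorm_le_lintegral_fderiv_ray [CompleteSpace F] (hφ : ContDiff ℝ 1 φ)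
    (hc : HasCompactSupport φ) (x : E) {θ : E} (hθ : ‖θ‖ = 1) :
    ‖φ x‖ₑ ≤ ∫⁻ s in Ioi (0 : ℝ), ‖fderiv ℝ φ (x + s • θ)‖ₑ := by
  have hray : Isometry fun s : ℝ ↦ x + s • θ :=
    Isometry.of_dist_eq fun s t ↦ by simp [dist_eq_norm, ← sub_smul, norm_smul, hθ]
  have hderiv (s : ℝ) : deriv (fun s : ℝ ↦ φ (x + s • θ)) s = fderiv ℝ φ (x + s • θ) θ := by
    have hline : HasDerivAt (fun s : ℝ ↦ x + s • θ) θ s := by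
      simpa using ((hasDerivAt_id s).smul_const θ).const_add x
    exact ((hφ.differentiable one_ne_zero _).hasFDerivAt.comp_hasDerivAt s hline).deriv
  have hFTC : ∫ s in Ioi (0 : ℝ), deriv (fun s : ℝ ↦ φ (x + s • θ)) s = -φ x := by
    simpa using HasCompactSupport.integral_Ioi_deriv_eq (f := fun s : ℝ ↦ φ (x + s • θ))
      (hφ.comp (by fun_prop)) (hc.comp_isClosedEmbedding hray.isClosedEmbedding) 0
  calc ‖φ x‖ₑ = ‖∫ s in Ioi (0 : ℝ), deriv (fun s : ℝ ↦ φ (x + s • θ)) s‖ₑ := by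
        rw [hFTC, enorm_neg]
    _ ≤ ∫⁻ s in Ioi (0 : ℝ), ‖deriv (fun s : ℝ ↦ φ (x + s • θ)) s‖ₑ :=
        enorm_integral_le_lintegral_enorm _
    _ ≤ ∫⁻ s in Ioi (0 : ℝ), ‖fderiv ℝ φ (x + s • θ)‖ₑ := by
        refine lintegral_mono fun s ↦ ?_
        rw [hderiv]
        have hθ' : ‖θ‖ₑ = 1 := by rw [← ofReal_norm, hθ, ENNReal.ofReal_one]
        simpa only [hθ', mul_one] using (fderiv ℝ φ (x + s • θ)).le_opENorm θ

variable [FiniteDimensional ℝ E] [Nontrivial E]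

lemma ofReal_pow_finrank_sub_one_mul_rpow {s : ℝ} (hs : 0 < s) (b : ℝ) :
    ENNReal.ofReal (s ^ (finrank ℝ E - 1)) * ENNReal.ofReal s ^ b =
      ENNReal.ofReal (s ^ ((finrank ℝ E : ℝ) - 1 + b)) := by
  rw [ENNReal.ofReal_rpow_of_pos hs, ← ENNReal.ofReal_mul (by positivity), ← Real.rpow_natCast,
    ← Real.rpow_add hs, Nat.cast_sub finrank_pos, Nat.cast_one]

variable [MeasurableSpace E] [BorelSpace E] (μ : Measure E) [μ.IsAddHaarMeasure]

lemma toSphere_univ_mul_enorm_le_lintegral_fderiv [CompleteSpace F] (hφ : ContDiff ℝ 1 φ)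
    (hc : HasCompactSupport φ) (x : E) :
    μ.toSphere univ * ‖φ x‖ₑ ≤
      ∫⁻ z, ‖fderiv ℝ φ z‖ₑ * ‖z - x‖ₑ ^ (-((finrank ℝ E : ℝ) - 1)) ∂μ := by
  have hD : Continuous (fderiv ℝ φ) := hφ.continuous_fderiv one_ne_zero
  have hmeas : Measurable fun z ↦ ‖fderiv ℝ φ z‖ₑ * ‖z - x‖ₑ ^ (-((finrank ℝ E : ℝ) - 1)) := by
    have := hD.enorm.measurable
    fun_prop
  rw [lintegral_eq_lintegral_toSphere_lintegral_Ioi μ hmeas x, mul_comm, ← lintegral_const]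
  refine lintegral_mono fun θ ↦ (enorm_le_lintegral_fderiv_ray hφ hc x
    (norm_eq_of_mem_sphere θ)).trans_eq ?_
  refine setLIntegral_congr_fun measurableSet_Ioi fun s (hs : 0 < s) ↦ ?_
  have hnorm : ‖x + s • (θ : E) - x‖ₑ = ENNReal.ofReal s := by
    rw [← ofReal_norm]
    simp [norm_smul, abs_of_pos hs]
  rw [hnorm, mul_left_comm, ofReal_pow_finrank_sub_one_mul_rpow hs]
  simp

lemma setLIntegral_ball_enorm_sub_rpow (x : E) (R b : ℝ) :
    ∫⁻ z in ball x R, ‖z - x‖ₑ ^ b ∂μ =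
      μ.toSphere univ * ∫⁻ s in Ioo 0 R, ENNReal.ofReal (s ^ ((finrank ℝ E : ℝ) - 1 + b)) := by
  let k : ℝ → ℝ≥0∞ := (Iio R).indicator fun s ↦ ENNReal.ofReal s ^ b
  have hk : Measurable k := Measurable.indicator (by fun_prop) measurableSet_Iio
  calc ∫⁻ z in ball x R, ‖z - x‖ₑ ^ b ∂μ = ∫⁻ z, k ‖z - x‖ ∂μ := by
        rw [← lintegral_indicator measurableSet_ball]
        refine lintegral_congr fun z ↦ ?_
        simp only [k, indicator, mem_ball, mem_Iio, dist_eq_norm, ofReal_norm]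
    _ = μ.toSphere univ * ∫⁻ s in Ioi (0 : ℝ), ENNReal.ofReal (s ^ (finrank ℝ E - 1)) * k s :=
        lintegral_fun_norm_sub μ hk x
    _ = μ.toSphere univ * ∫⁻ s in Ioi (0 : ℝ), (Iio R).indicator
          (fun s ↦ ENNReal.ofReal (s ^ ((finrank ℝ E : ℝ) - 1 + b))) s := by
        congr 1
        refine setLIntegral_congr_fun measurableSet_Ioi fun s (hs : 0 < s) ↦ ?_
        by_cases hsR : s < R
        · simp only [k, indicator_of_mem (mem_Iio.2 hsR), ofReal_pow_finrank_sub_one_mul_rpow hs]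
        · simp only [k, indicator_of_notMem (notMem_Iio.2 (not_lt.1 hsR)), mul_zero]
    _ = _ := by
        rw [setLIntegral_indicator measurableSet_Iio, Iio_inter_Ioi]

lemma setLIntegral_ball_kernel_rpow_le (hp : (finrank ℝ E : ℝ) < p) (x y : E) {R : ℝ}
    (hR : 0 ≤ R) :
    ∫⁻ z in ball y R, (‖z - x‖ₑ ^ (-((finrank ℝ E : ℝ) - 1))) ^ p.conjExponent ∂μ ≤
      μ.toSphere univ * ENNReal.ofReal (shellResistance (finrank ℝ E) p 0 R) := by
  have hd : (1 : ℝ) ≤ finrank ℝ E := by exact_mod_cast finrank_pos (R := ℝ) (M := E)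
  have hp1 : 0 < p - 1 := by linarith
  have hint := (intervalIntegral.intervalIntegrable_rpow' (a := 0) (b := R)
    (neg_one_lt_neg_sub_div (by linarith) hp)).1.mono_set Ioo_subset_Ioc_self
  have hexp : (finrank ℝ E : ℝ) - 1 + -((finrank ℝ E : ℝ) - 1) * p.conjExponent =
      -(((finrank ℝ E : ℝ) - 1) / (p - 1)) := by
    rw [Real.conjExponent]
    field_simp
    ring
  have hanti : Antitone fun t : ℝ≥0∞ ↦ (t ^ (-((finrank ℝ E : ℝ) - 1))) ^ p.conjExponent := by
    intro s t hst
    have hq : 0 ≤ p.conjExponent := div_nonneg (by linarith) hp1.le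
    simp only [ENNReal.rpow_neg]
    gcongr
  calc _ ≤ ∫⁻ z in ball x R, (‖z - x‖ₑ ^ (-((finrank ℝ E : ℝ) - 1))) ^ p.conjExponent ∂μ :=
        setLIntegral_ball_le_setLIntegral_ball_of_antitone μ hanti x y R
    _ = μ.toSphere univ *
          ∫⁻ s in Ioo 0 R, ENNReal.ofReal (s ^ (-(((finrank ℝ E : ℝ) - 1) / (p - 1)))) := by
        simp only [← ENNReal.rpow_mul]
        rw [setLIntegral_ball_enorm_sub_rpow, hexp]
    _ = _ := by
        rw [shellResistance, intervalIntegral.integral_of_le hR, integral_Ioc_eq_integral_Ioo,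
          ofReal_integral_eq_lintegral_ofReal hint]
        filter_upwards [ae_restrict_mem measurableSet_Ioo] with s hs
        exact Real.rpow_nonneg hs.1.le _

lemma mul_rpow_le_of_le_rpow_mul_rpow {q : ℝ} (hpq : p.HolderConjugate q) {W f I M : ℝ≥0∞}
    (hW0 : W ≠ 0) (hW : W ≠ ∞) (h : W * f ≤ I ^ (1 / p) * (W * M) ^ (1 / q)) :
    W * f ^ p ≤ M ^ (p - 1) * I := by
  have hexp : 1 / q * p = p - 1 := by
    rw [one_div_mul_eq_div, hpq.div_conj_eq_sub_one]
  have hWp : W ^ p = W ^ (p - 1) * W := by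
    simpa using ENNReal.rpow_add (p - 1) 1 hW0 hW
  have hpow : W ^ (p - 1) * (W * f ^ p) ≤ W ^ (p - 1) * (M ^ (p - 1) * I) :=
    calc W ^ (p - 1) * (W * f ^ p) = (W * f) ^ p := by
          rw [← mul_assoc, ← hWp, ENNReal.mul_rpow_of_nonneg _ _ hpq.nonneg]
      _ ≤ (I ^ (1 / p) * (W * M) ^ (1 / q)) ^ p := ENNReal.rpow_le_rpow h hpq.nonneg
      _ = I * (W ^ (p - 1) * M ^ (p - 1)) := by
          rw [ENNReal.mul_rpow_of_nonneg _ _ hpq.nonneg, ← ENNReal.rpow_mul, ← ENNReal.rpow_mul,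
            one_div_mul_cancel hpq.ne_zero, ENNReal.rpow_one, hexp,
            ENNReal.mul_rpow_of_nonneg _ _ hpq.sub_one_pos.le]
      _ = W ^ (p - 1) * (M ^ (p - 1) * I) := by ring
  exact (ENNReal.mul_le_mul_iff_right (ENNReal.rpow_pos (pos_iff_ne_zero.2 hW0) hW).ne'
    (ENNReal.rpow_ne_top_of_nonneg hpq.sub_one_pos.le hW)).1 hpow

theorem toSphere_univ_mul_enorm_rpow_le [CompleteSpace F] (hp : (finrank ℝ E : ℝ) < p)
    (hφ : ContDiff ℝ 1 φ) {y : E} {R : ℝ} (hR : 0 ≤ R) (hsupp : tsupport φ ⊆ ball y R) (x : E) :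
    μ.toSphere univ * ‖φ x‖ₑ ^ p ≤
      ENNReal.ofReal (shellResistance (finrank ℝ E) p 0 R) ^ (p - 1) *
        ∫⁻ z, ‖fderiv ℝ φ z‖ₑ ^ p ∂μ := by
  have hd : (1 : ℝ) ≤ finrank ℝ E := by exact_mod_cast finrank_pos (R := ℝ) (M := E)
  have hpq : p.HolderConjugate p.conjExponent := .conjExponent (by linarith)
  have hc : HasCompactSupport φ :=
    Metric.isCompact_of_isClosed_isBounded (isClosed_tsupport φ) (isBounded_ball.subset hsupp)
  have hD : Continuous (fderiv ℝ φ) := hφ.continuous_fderiv one_ne_zero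
  have hDsupp (z : E) (hz : z ∉ ball y R) : ‖fderiv ℝ φ z‖ₑ = 0 := by
    have hz0 : fderiv ℝ φ z = 0 :=
      image_eq_zero_of_notMem_tsupport fun h ↦ hz (hsupp (tsupport_fderiv_subset ℝ h))
    rw [← ofReal_norm, hz0, norm_zero, ENNReal.ofReal_zero]
  refine mul_rpow_le_of_le_rpow_mul_rpow hpq
    (measure_univ_ne_zero.2 μ.toSphere_ne_zero) (measure_ne_top _ _) ?_
  calc μ.toSphere univ * ‖φ x‖ₑ
      ≤ ∫⁻ z, ‖fderiv ℝ φ z‖ₑ * ‖z - x‖ₑ ^ (-((finrank ℝ E : ℝ) - 1)) ∂μ :=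
        toSphere_univ_mul_enorm_le_lintegral_fderiv μ hφ hc x
    _ = ∫⁻ z in ball y R, ‖fderiv ℝ φ z‖ₑ * ‖z - x‖ₑ ^ (-((finrank ℝ E : ℝ) - 1)) ∂μ := by
        refine (setLIntegral_eq_of_support_subset ?_).symm
        intro z hz
        by_contra hzR
        exact hz (by simp only [hDsupp z hzR, zero_mul])
    _ ≤ (∫⁻ z in ball y R, ‖fderiv ℝ φ z‖ₑ ^ p ∂μ) ^ (1 / p) *
          (∫⁻ z in ball y R, (‖z - x‖ₑ ^ (-((finrank ℝ E : ℝ) - 1))) ^ p.conjExponent ∂μ) ^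
            (1 / p.conjExponent) :=
        ENNReal.lintegral_mul_le_Lp_mul_Lq _ hpq hD.enorm.measurable.aemeasurable (by fun_prop)
    _ ≤ _ := by
        have := hpq.nonneg
        have := hpq.symm.nonneg
        gcongr
        · exact Measure.restrict_le_self
        · exact setLIntegral_ball_kernel_rpow_le μ hp x y hR

end PotentialEstimate

/-! ### Radial test functions -/

section RadialProfile

lemma contDiff_mul_of_tsupport_subset {E : Type*} [NormedAddCommGroup E] [NormedSpace ℝ E]
    {n : ℕ∞} {χ w : E → ℝ} {U : Set E} (hU : IsOpen U) (hχ : ContDiff ℝ n χ)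
    (hw : ContDiffOn ℝ n w U) (hχU : tsupport χ ⊆ U) : ContDiff ℝ n fun x ↦ χ x * w x := by
  rw [contDiff_iff_contDiffAt]
  intro x
  by_cases hx : x ∈ tsupport χ
  · exact hχ.contDiffAt.mul (hw.contDiffAt (hU.mem_nhds (hχU hx)))
  · refine (contDiffAt_const (c := 0)).congr_of_eventuallyEq ?_
    filter_upwards [notMem_tsupport_iff_eventuallyEq.1 hx] with y hy
    rw [hy, Pi.zero_apply, zero_mul]

variable {w : ℝ → ℝ} {r R M : ℝ}

lemma exists_lt_setIntegral_Icc (hrR : r < R) (hw : IntegrableOn w (Ioo r R))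
    (hM : M < ∫ t in Ioo r R, w t) :
    ∃ δ > 0, δ < (R - r) / 2 ∧ M < ∫ t in Icc (r + δ) (R - δ), w t := by
  have hleft : Tendsto (fun δ ↦ r + δ) (nhdsWithin 0 (Ioi 0)) (nhds r) :=
    tendsto_nhdsWithin_of_tendsto_nhds (Continuous.tendsto' (by fun_prop) _ _ (add_zero r))
  have hright : Tendsto (fun δ ↦ R - δ) (nhdsWithin 0 (Ioi 0)) (nhds R) :=
    tendsto_nhdsWithin_of_tendsto_nhds (Continuous.tendsto' (by fun_prop) _ _ (sub_zero R))
  have hlim := (aecover_Ioo_of_Icc hleft hright).integral_tendsto_of_countably_generated hw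
  have hhalf : 0 < (R - r) / 2 := by linarith
  obtain ⟨δ, hMδ, hδ0, hδ⟩ :=
    ((hlim.eventually (lt_mem_nhds hM)).and (Ioo_mem_nhdsGT hhalf)).exists
  refine ⟨δ, hδ0, hδ, hMδ.trans_eq ?_⟩
  rw [Measure.restrict_restrict measurableSet_Icc,
    inter_eq_left.2 (Icc_subset_Ioo (by linarith) (by linarith))]

lemma exists_contDiff_le_lt_integral (hrR : r < R) (hw : ContDiffOn ℝ (⊤ : ℕ∞) w (Ioo r R))
    (hw0 : ∀ t ∈ Ioo r R, 0 ≤ w t) (hwi : IntegrableOn w (Ioo r R))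
    (hM : M < ∫ t in Ioo r R, w t) :
    ∃ f : ℝ → ℝ, ∃ b < R, ContDiff ℝ (⊤ : ℕ∞) f ∧ Function.support f ⊆ Ioc r b ∧ (∀ t, 0 ≤ f t) ∧
      (∀ t ∈ Ioo r R, f t ≤ w t) ∧ M < ∫ t, f t := by
  obtain ⟨δ, hδ0, hδ, hMδ⟩ := exists_lt_setIntegral_Icc hrR hwi hM
  let χ : ContDiffBump ((r + R) / 2) :=
    ⟨(R - r) / 2 - δ, (R - r) / 2 - δ / 2, by linarith, by linarith⟩
  have hχ1 (t : ℝ) (ht : t ∈ Icc (r + δ) (R - δ)) : χ t = 1 :=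
    χ.one_of_mem_closedBall <| by
      rw [show χ.rIn = (R - r) / 2 - δ from rfl, Real.closedBall_eq_Icc]
      exact ⟨by linarith [ht.1], by linarith [ht.2]⟩
  have hχsupp : tsupport χ = Icc (r + δ / 2) (R - δ / 2) := by
    rw [χ.tsupport_eq, Real.closedBall_eq_Icc]
    congr 1 <;> ring
  have hχU : tsupport χ ⊆ Ioo r R :=
    hχsupp.trans_subset (Icc_subset_Ioo (by linarith) (by linarith))
  have hf := contDiff_mul_of_tsupport_subset isOpen_Ioo χ.contDiff hw hχU
  have hf0 (t : ℝ) : 0 ≤ χ t * w t := by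
    by_cases ht : t ∈ tsupport χ
    · exact mul_nonneg χ.nonneg (hw0 t (hχU ht))
    · rw [image_eq_zero_of_notMem_tsupport ht, zero_mul]
  refine ⟨fun t ↦ χ t * w t, R - δ / 2, by linarith, hf, fun t ht ↦ ?_, hf0,
    fun t ht ↦ mul_le_of_le_one_left (hw0 t ht) χ.le_one, ?_⟩
  · obtain ⟨hrt, htR⟩ := hχsupp.subset (subset_tsupport _ (left_ne_zero_of_mul ht))
    exact ⟨by linarith, htR⟩
  · calc M < ∫ t in Icc (r + δ) (R - δ), w t := hMδ
      _ = ∫ t in Icc (r + δ) (R - δ), χ t * w t :=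
          setIntegral_congr_fun measurableSet_Icc fun t ht ↦ by simp only [hχ1 t ht, one_mul]
      _ ≤ ∫ t, χ t * w t :=
          setIntegral_le_integral
            (hf.continuous.integrable_of_hasCompactSupport χ.hasCompactSupport.mul_right)
            (ae_of_all _ hf0)

lemma exists_contDiff_cutoff (hrR : r < R) (hw : ContDiffOn ℝ (⊤ : ℕ∞) w (Ioo r R))
    (hw0 : ∀ t ∈ Ioo r R, 0 ≤ w t) (hwi : IntegrableOn w (Ioo r R)) (hM0 : 0 < M)
    (hM : M < ∫ t in Ioo r R, w t) :
    ∃ h : ℝ → ℝ, ∃ b < R, ContDiff ℝ (⊤ : ℕ∞) h ∧ (∀ t ≤ r, h t = 1) ∧ (∀ t ≥ b, h t = 0) ∧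
      (∀ t, deriv h t ≤ 0) ∧ (∀ t ∉ Ioo r R, deriv h t = 0) ∧
      ∀ t ∈ Ioo r R, -deriv h t ≤ w t / M := by
  obtain ⟨f, b, hbR, hf, hfsupp, hf0, hfw, hMf⟩ := exists_contDiff_le_lt_integral hrR hw hw0 hwi hM
  have hm0 : 0 < ∫ t, f t := hM0.trans hMf
  have hint (s t : ℝ) : IntervalIntegrable f volume s t := hf.continuous.intervalIntegrable s t
  have hzero (t : ℝ) (ht : t ∉ Ioc r b) : f t = 0 := by
    by_contra hft
    exact ht (hfsupp hft)
  have hderiv (s : ℝ) : HasDerivAt (fun s ↦ (∫ t in s..R, f t) / ∫ t, f t) (-f s / ∫ t, f t) s :=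
    (intervalIntegral.integral_hasDerivAt_left (hint s R)
      (hf.continuous.stronglyMeasurableAtFilter _ _) hf.continuous.continuousAt).div_const _
  have hderiv_eq := funext fun s ↦ (hderiv s).deriv
  refine ⟨fun s ↦ (∫ t in s..R, f t) / ∫ t, f t, b, hbR, ?_, fun s hs ↦ ?_, fun s hs ↦ ?_, ?_⟩
  · refine contDiff_infty_iff_deriv.2 ⟨fun s ↦ (hderiv s).differentiableAt, ?_⟩
    rw [hderiv_eq]
    exact hf.neg.div_const _
  · beta_reduce
    rw [intervalIntegral.integral_eq_integral_of_support_subset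
      (hfsupp.trans (Ioc_subset_Ioc hs hbR.le)), div_self hm0.ne']
  · beta_reduce
    rw [intervalIntegral.integral_zero_ae, zero_div]
    refine ae_of_all _ fun t ht ↦ hzero t fun htb ↦ ?_
    exact (le_min hs hbR.le).not_gt (ht.1.trans_le htb.2)
  · simp only [hderiv_eq]
    refine ⟨fun t ↦ ?_, fun t ht ↦ ?_, fun t ht ↦ ?_⟩
    · exact div_nonpos_of_nonpos_of_nonneg (neg_nonpos.2 (hf0 t)) hm0.le
    · rw [hzero t fun htb ↦ ht ⟨htb.1, htb.2.trans_lt hbR⟩, neg_zero, zero_div]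
    · rw [neg_div, neg_neg]
      exact div_le_div₀ (hw0 t ht) (hfw t ht) hM0 hMf.le

end RadialProfile

section RadialFunction

lemma contDiff_comp_norm_sub {E : Type*} [NormedAddCommGroup E] [InnerProductSpace ℝ E]
    {n : WithTop ℕ∞} {h : ℝ → ℝ} {r c : ℝ} (hr : 0 < r) (hh : ContDiff ℝ n h)
    (hc : ∀ s ≤ r, h s = c) (x : E) : ContDiff ℝ n fun z ↦ h ‖z - x‖ := by
  rw [contDiff_iff_contDiffAt]
  intro z
  rcases eq_or_ne z x with rfl | hzx
  · refine (contDiffAt_const (c := c)).congr_of_eventuallyEq ?_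
    filter_upwards [ball_mem_nhds z hr] with y hy
    exact hc _ (mem_ball_iff_norm.1 hy).le
  · exact hh.contDiffAt.comp z ((contDiffAt_id.sub contDiffAt_const).norm ℝ (sub_ne_zero.2 hzx))

variable {E : Type*} [NormedAddCommGroup E] [NormedSpace ℝ E] {h : ℝ → ℝ}

lemma norm_fderiv_comp_norm_sub_le {x z : E} (hh : DifferentiableAt ℝ h ‖z - x‖) :
    ‖fderiv ℝ (fun z ↦ h ‖z - x‖) z‖ ≤ ‖deriv h ‖z - x‖‖ := by
  refine le_of_forall_gt_imp_ge_of_dense fun C hC ↦ ?_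
  have hslope := hh.hasDerivAt.hasDerivWithinAt (s := univ) |>.limsup_norm_slope_le hC
  rw [nhdsWithin_univ] at hslope
  have hC0 : 0 ≤ C := (norm_nonneg _).trans hC.le
  refine norm_fderiv_le_of_lip' ℝ hC0 ?_
  have hnorm : Continuous fun y ↦ ‖y - x‖ := by fun_prop
  filter_upwards [hnorm.tendsto z |>.eventually hslope] with y hy
  have hdist : ‖‖y - x‖ - ‖z - x‖‖ ≤ ‖y - z‖ := by
    simpa using abs_norm_sub_norm_le (y - x) (z - x)
  rcases eq_or_ne ‖y - x‖ ‖z - x‖ with heq | hne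
  · rw [heq, sub_self, norm_zero]
    positivity
  · rw [inv_mul_lt_iff₀ (norm_pos_iff.2 (sub_ne_zero.2 hne)), mul_comm] at hy
    exact hy.le.trans (by gcongr)

variable [FiniteDimensional ℝ E] [Nontrivial E] [MeasurableSpace E] [BorelSpace E]
  (μ : Measure E) [μ.IsAddHaarMeasure] {p : ℝ}

lemma lintegral_enorm_fderiv_comp_norm_sub_rpow_le (hp : 0 ≤ p) (hh : Differentiable ℝ h) (x : E) :
    ∫⁻ z, ‖fderiv ℝ (fun z ↦ h ‖z - x‖) z‖ₑ ^ p ∂μ ≤ μ.toSphere univ *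
      ∫⁻ s in Ioi (0 : ℝ), ENNReal.ofReal (s ^ (finrank ℝ E - 1)) * ‖deriv h s‖ₑ ^ p := by
  have hmeas : Measurable fun s ↦ ‖deriv h s‖ₑ ^ p := (measurable_deriv h).enorm.pow_const p
  rw [← lintegral_fun_norm_sub μ hmeas x]
  refine lintegral_mono fun z ↦ ENNReal.rpow_le_rpow ?_ hp
  exact enorm_le_iff_norm_le.2 (norm_fderiv_comp_norm_sub_le (hh _))

end RadialFunction

section RadialEnergy

variable {p M : ℝ} {n : ℕ}

lemma pow_mul_rpow_le_of_le_rpow_neg_div {s y : ℝ} (hp : 1 < p) (hM : 0 < M) (hs : 0 < s)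
    (hy : 0 ≤ y) (hyM : y ≤ s ^ (-(n / (p - 1))) / M) : s ^ n * y ^ p ≤ M ^ (1 - p) * y := by
  have hp1 : 0 < p - 1 := by linarith
  have hypow : y ^ (p - 1) ≤ (s ^ n)⁻¹ * M ^ (1 - p) :=
    calc y ^ (p - 1) ≤ (s ^ (-(n / (p - 1))) / M) ^ (p - 1) := Real.rpow_le_rpow hy hyM hp1.le
      _ = (s ^ n)⁻¹ * M ^ (1 - p) := by
          rw [Real.div_rpow (by positivity) hM.le, ← Real.rpow_mul hs.le, neg_mul,
            div_mul_cancel₀ _ hp1.ne', Real.rpow_neg hs.le, Real.rpow_natCast, div_eq_mul_inv,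
            ← Real.rpow_neg hM.le, neg_sub]
  calc s ^ n * y ^ p = s ^ n * (y ^ (p - 1) * y) := by
        rw [← Real.rpow_add_one' hy (by linarith), sub_add_cancel]
    _ ≤ s ^ n * ((s ^ n)⁻¹ * M ^ (1 - p) * y) := by gcongr
    _ = M ^ (1 - p) * y := by field_simp

lemma lintegral_pow_mul_enorm_deriv_rpow_le {h : ℝ → ℝ} {r R : ℝ} (hp : 1 < p) (hM : 0 < M)
    (hr : 0 ≤ r) (hrR : r ≤ R) (hh : ContDiff ℝ 1 h) (hr1 : h r = 1) (hR0 : h R = 0)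
    (hneg : ∀ t, deriv h t ≤ 0) (hsupp : ∀ t ∉ Ioo r R, deriv h t = 0)
    (hle : ∀ t ∈ Ioo r R, -deriv h t ≤ t ^ (-(n / (p - 1))) / M) :
    ∫⁻ s in Ioi (0 : ℝ), ENNReal.ofReal (s ^ n) * ‖deriv h s‖ₑ ^ p ≤
      ENNReal.ofReal (M ^ (1 - p)) := by
  have hcont : Continuous (deriv h) := hh.continuous_deriv le_rfl
  have hFTC : ∫ s in Ioo r R, -deriv h s = 1 := by
    rw [integral_neg, ← integral_Ioc_eq_integral_Ioo, ← intervalIntegral.integral_of_le hrR,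
      intervalIntegral.integral_deriv_eq_sub (fun t _ ↦ hh.differentiable one_ne_zero t)
        (hcont.intervalIntegrable _ _), hr1, hR0]
    norm_num
  have hint : IntegrableOn (fun s ↦ -deriv h s) (Ioo r R) :=
    hcont.neg.integrableOn_Icc.mono_set Ioo_subset_Icc_self
  have hpoint (s : ℝ) (hs : s ∈ Ioo r R) : ENNReal.ofReal (s ^ n) * ‖deriv h s‖ₑ ^ p ≤
      ENNReal.ofReal (M ^ (1 - p)) * ENNReal.ofReal (-deriv h s) := by
    have hs0 : 0 < s := hr.trans_lt hs.1
    have hy : 0 ≤ -deriv h s := neg_nonneg.2 (hneg s)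
    rw [← enorm_neg, Real.enorm_of_nonneg hy, ENNReal.ofReal_rpow_of_nonneg hy (by linarith),
      ← ENNReal.ofReal_mul (by positivity), ← ENNReal.ofReal_mul (by positivity)]
    exact ENNReal.ofReal_le_ofReal
      (pow_mul_rpow_le_of_le_rpow_neg_div hp hM hs0 hy (hle s hs))
  calc ∫⁻ s in Ioi (0 : ℝ), ENNReal.ofReal (s ^ n) * ‖deriv h s‖ₑ ^ p
      ≤ ∫⁻ s, ENNReal.ofReal (s ^ n) * ‖deriv h s‖ₑ ^ p := setLIntegral_le_lintegral _ _
    _ = ∫⁻ s in Ioo r R, ENNReal.ofReal (s ^ n) * ‖deriv h s‖ₑ ^ p := by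
        refine (setLIntegral_eq_of_support_subset fun s hs ↦ ?_).symm
        by_contra hsrR
        exact hs (by simp [hsupp s hsrR, zero_lt_one.trans hp])
    _ ≤ ∫⁻ s in Ioo r R, ENNReal.ofReal (M ^ (1 - p)) * ENNReal.ofReal (-deriv h s) :=
        setLIntegral_mono (by fun_prop) hpoint
    _ = ENNReal.ofReal (M ^ (1 - p)) := by
        rw [lintegral_const_mul _ (by fun_prop), ← ofReal_integral_eq_lintegral_ofReal hint
          (ae_of_all _ fun s ↦ neg_nonneg.2 (hneg s)), hFTC, ENNReal.ofReal_one, mul_one]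

variable {E : Type*} [NormedAddCommGroup E] [InnerProductSpace ℝ E] [FiniteDimensional ℝ E]
  [Nontrivial E] [MeasurableSpace E] [BorelSpace E] (μ : Measure E) [μ.IsAddHaarMeasure]

lemma exists_contDiff_lintegral_enorm_fderiv_rpow_le (hp : 1 < p) (x : E) {r R : ℝ} (hr : 0 < r)
    (hrR : r < R) (hM0 : 0 < M) (hM : M < shellResistance (finrank ℝ E) p r R) :
    ∃ φ : E → ℝ, ContDiff ℝ (⊤ : ℕ∞) φ ∧ tsupport φ ⊆ ball x R ∧ (∀ z ∈ closedBall x r, φ z = 1) ∧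
      ∫⁻ z, ‖fderiv ℝ φ z‖ₑ ^ p ∂μ ≤ μ.toSphere univ * ENNReal.ofReal (M ^ (1 - p)) := by
  have hd : (finrank ℝ E : ℝ) - 1 = (finrank ℝ E - 1 : ℕ) := (Nat.cast_pred finrank_pos).symm
  let w (s : ℝ) : ℝ := s ^ (-((finrank ℝ E - 1 : ℕ) / (p - 1)))
  have hw : ∀ s > 0, ContDiffAt ℝ (⊤ : ℕ∞) w s := fun s hs ↦
    contDiffAt_id.rpow_const_of_ne hs.ne'
  have hwi : IntegrableOn w (Ioo r R) :=
    (ContinuousOn.integrableOn_Icc fun s hs ↦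
      (hw s (hr.trans_le hs.1)).continuousAt.continuousWithinAt).mono_set Ioo_subset_Icc_self
  have hMw : M < ∫ s in Ioo r R, w s := by
    rwa [shellResistance, hd, intervalIntegral.integral_of_le hrR.le,
      integral_Ioc_eq_integral_Ioo] at hM
  obtain ⟨h, b, hbR, hh, hh1, hh0, hneg, hsupp, hle⟩ :=
    exists_contDiff_cutoff hrR (fun s hs ↦ (hw s (hr.trans hs.1)).contDiffWithinAt)
      (fun s hs ↦ Real.rpow_nonneg (hr.trans hs.1).le _) hwi hM0 hMw
  have htsupp : tsupport (fun z ↦ h ‖z - x‖) ⊆ closedBall x b := by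
    refine closure_minimal (fun z hz ↦ ?_) isClosed_closedBall
    by_contra hzb
    exact hz (hh0 _ (dist_eq_norm z x ▸ (not_le.1 hzb).le))
  have hh' : ContDiff ℝ 1 h := hh.of_le (by exact_mod_cast le_top)
  refine ⟨fun z ↦ h ‖z - x‖, contDiff_comp_norm_sub hr hh hh1 x,
    htsupp.trans (closedBall_subset_ball hbR), fun z hz ↦ hh1 _ (mem_closedBall_iff_norm.1 hz), ?_⟩
  exact (lintegral_enorm_fderiv_comp_norm_sub_rpow_le μ (by linarith)
    (hh'.differentiable one_ne_zero) x).trans (mul_le_mul_right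
      (lintegral_pow_mul_enorm_deriv_rpow_le hp hM0 hr.le hrR.le hh' (hh1 r le_rfl)
        (hh0 R hbR.le) hneg hsupp hle) _)

end RadialEnergy

/-! ### Capacities of points and balls -/

section DirichletEnergy

variable {E F : Type*} [NormedAddCommGroup E] [NormedSpace ℝ E] [NormedAddCommGroup F]
  [NormedSpace ℝ F] [MeasurableSpace E] [BorelSpace E] (μ : Measure E)
  [IsFiniteMeasureOnCompacts μ] {φ : E → F} {p : ℝ}

lemma ofReal_integral_norm_fderiv_rpow (hp : 0 < p) (hφ : ContDiff ℝ 1 φ)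
    (hc : HasCompactSupport φ) :
    ENNReal.ofReal (∫ z, ‖fderiv ℝ φ z‖ ^ p ∂μ) = ∫⁻ z, ‖fderiv ℝ φ z‖ₑ ^ p ∂μ := by
  have hcont : Continuous fun z ↦ ‖fderiv ℝ φ z‖ ^ p :=
    (hφ.continuous_fderiv one_ne_zero).norm.rpow_const fun _ ↦ Or.inr hp.le
  have hsupp : HasCompactSupport fun z ↦ ‖fderiv ℝ φ z‖ ^ p :=
    (hc.fderiv (𝕜 := ℝ)).comp_left (g := fun L ↦ ‖L‖ ^ p) (by
      rw [norm_zero, Real.zero_rpow hp.ne'])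
  rw [ofReal_integral_eq_lintegral_ofReal (hcont.integrable_of_hasCompactSupport hsupp)
    (ae_of_all _ fun z ↦ by positivity)]
  refine lintegral_congr fun z ↦ ?_
  rw [← ofReal_norm, ENNReal.ofReal_rpow_of_nonneg (norm_nonneg _) hp.le]

end DirichletEnergy

/-- The relative `p`-capacity `N ω_N ρ ^ (1 - p)` of the closed ball of radius `r` in the concentric
open ball of radius `R`, where `ρ` is the resistance of the shell between them. For `r = 0` it is
the capacity of the centre. -/
def shellCapacity (N : ℕ) (p r R : ℝ) : ℝ :=
  N * volume.real (ball (0 : EuclideanSpace ℝ (Fin N)) 1) * shellResistance N p r R ^ (1 - p)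

/-- The threshold `γ₀`, the quotient of the `p`-capacities of a point and of a concentric closed
ball of radius `1`, both relative to the ball of radius `2`. -/
def superconformalThreshold (N : ℕ) (p : ℝ) : ℝ :=
  2 ^ ((N : ℝ) - p) * (2 ^ ((p - N) / (p - 1)) - 1) ^ (p - 1)

section Capacity

variable {N : ℕ} {p : ℝ} {K U : Set (EuclideanSpace ℝ (Fin N))}

lemma pCapacity_nonneg (p : ℝ) (K U : Set (EuclideanSpace ℝ (Fin N))) : 0 ≤ pCapacity p K U := by
  refine Real.sInf_nonneg ?_
  rintro c ⟨φ, -, -, -, -, rfl⟩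
  positivity

lemma pCapacity_le_integral {φ : EuclideanSpace ℝ (Fin N) → ℝ} (hφ : ContDiff ℝ (⊤ : ℕ∞) φ)
    (hc : HasCompactSupport φ) (hsupp : tsupport φ ⊆ U) (h1 : ∀ x ∈ K, 1 ≤ φ x) :
    pCapacity p K U ≤ ∫ x, ‖fderiv ℝ φ x‖ ^ p := by
  refine csInf_le ⟨0, ?_⟩ ⟨φ, hφ, hc, hsupp, h1, rfl⟩
  rintro c ⟨ψ, -, -, -, -, rfl⟩
  positivity

lemma pCapacity_empty (hp : p ≠ 0) (U : Set (EuclideanSpace ℝ (Fin N))) : pCapacity p ∅ U = 0 := by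
  refine le_antisymm ?_ (pCapacity_nonneg p ∅ U)
  simpa [Real.zero_rpow hp] using pCapacity_le_integral (p := p) (K := ∅) (U := U)
    (φ := fun _ ↦ 0) contDiff_const .zero (by simp [tsupport]) (by simp)

lemma toSphere_volume_univ : (volume : Measure (EuclideanSpace ℝ (Fin N))).toSphere univ =
    ENNReal.ofReal (N * volume.real (ball (0 : EuclideanSpace ℝ (Fin N)) 1)) := by
  rw [← ofReal_measureReal, toSphere_real_apply_univ, finrank_euclideanSpace_fin]

variable [NeZero N]

lemma one_lt_of_natCast_lt (hp : (N : ℝ) < p) : 1 < p :=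
  (Nat.one_le_cast.2 (NeZero.one_le (n := N))).trans_lt hp

lemma natCast_mul_measureReal_ball_pos :
    0 < N * volume.real (ball (0 : EuclideanSpace ℝ (Fin N)) 1) :=
  mul_pos (Nat.cast_pos.2 (NeZero.pos N))
    (ENNReal.toReal_pos (measure_ball_pos _ _ one_pos).ne' measure_ball_lt_top.ne)

lemma shellCapacity_pos (hp : (N : ℝ) < p) {r R : ℝ} (hr : 0 ≤ r) (hrR : r < R) :
    0 < shellCapacity N p r R :=
  mul_pos natCast_mul_measureReal_ball_pos
    (Real.rpow_pos_of_pos (shellResistance_pos (one_lt_of_natCast_lt hp) hp hr hrR) _)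

lemma shellCapacity_le_integral (hp : (N : ℝ) < p) {φ : EuclideanSpace ℝ (Fin N) → ℝ}
    (hφ : ContDiff ℝ 1 φ) (hc : HasCompactSupport φ) {x y : EuclideanSpace ℝ (Fin N)} {R : ℝ}
    (hR : 0 < R) (hsupp : tsupport φ ⊆ ball y R) (hx : 1 ≤ φ x) :
    shellCapacity N p 0 R ≤ ∫ z, ‖fderiv ℝ φ z‖ ^ p := by
  have hp1 := one_lt_of_natCast_lt hp
  have hρ : 0 < shellResistance N p 0 R := shellResistance_pos hp1 hp le_rfl hR
  have hφx : 1 ≤ ‖φ x‖ₑ ^ p :=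
    ENNReal.one_le_rpow (by rwa [Real.enorm_of_nonneg (by linarith), ENNReal.one_le_ofReal])
      (by linarith)
  have hkey := toSphere_univ_mul_enorm_rpow_le volume (by simpa using hp) hφ hR.le hsupp x
  rw [toSphere_volume_univ, finrank_euclideanSpace_fin,
    ← ofReal_integral_norm_fderiv_rpow _ (by linarith) hφ hc, ENNReal.ofReal_rpow_of_pos hρ,
    ← ENNReal.ofReal_mul (by positivity)] at hkey
  have hreal : N * volume.real (ball (0 : EuclideanSpace ℝ (Fin N)) 1) ≤
      shellResistance N p 0 R ^ (p - 1) * ∫ z, ‖fderiv ℝ φ z‖ ^ p :=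
    (ENNReal.ofReal_le_ofReal_iff (by positivity)).1 ((le_mul_of_one_le_right' hφx).trans hkey)
  rwa [shellCapacity, ← neg_sub p 1, Real.rpow_neg hρ.le, ← div_eq_mul_inv,
    div_le_iff₀' (by positivity)]

lemma shellCapacity_zero_le_pCapacity (hp : (N : ℝ) < p) {x y : EuclideanSpace ℝ (Fin N)} {r R : ℝ}
    (hr : 0 < r) (hrR : r < R) (hK : K ⊆ closedBall y r) (hx : x ∈ K) :
    shellCapacity N p 0 R ≤ pCapacity p K (ball y R) := by
  refine le_csInf ?_ ?_
  · let χ : ContDiffBump y := ⟨r, (r + R) / 2, hr, by linarith⟩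
    refine ⟨_, χ, χ.contDiff, χ.hasCompactSupport, ?_, fun z hz ↦ ?_, rfl⟩
    · rw [χ.tsupport_eq]
      exact closedBall_subset_ball (show (r + R) / 2 < R by linarith)
    · exact (χ.one_of_mem_closedBall (hK hz)).ge
  · rintro c ⟨φ, hφ, hc, hsupp, h1, rfl⟩
    exact shellCapacity_le_integral hp (hφ.of_le (by exact_mod_cast le_top)) hc (hr.trans hrR)
      hsupp (h1 x hx)

lemma pCapacity_closedBall_le_of_lt_shellResistance (hp : 1 < p) (x : EuclideanSpace ℝ (Fin N))
    {r R M : ℝ} (hr : 0 < r) (hrR : r < R) (hM0 : 0 < M) (hM : M < shellResistance N p r R) :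
    pCapacity p (closedBall x r) (ball x R) ≤
      N * volume.real (ball (0 : EuclideanSpace ℝ (Fin N)) 1) * M ^ (1 - p) := by
  obtain ⟨φ, hφ, hsupp, hφ1, hle⟩ :=
    exists_contDiff_lintegral_enorm_fderiv_rpow_le volume hp x hr hrR hM0 (by simpa using hM)
  have hc : HasCompactSupport φ :=
    isCompact_of_isClosed_isBounded (isClosed_tsupport φ) (isBounded_ball.subset hsupp)
  refine (pCapacity_le_integral hφ hc hsupp fun z hz ↦ (hφ1 z hz).ge).trans ?_
  rwa [toSphere_volume_univ, ← ofReal_integral_norm_fderiv_rpow _ (by linarith)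
    (hφ.of_le (by exact_mod_cast le_top)) hc, ← ENNReal.ofReal_mul (by positivity),
    ENNReal.ofReal_le_ofReal_iff (by positivity)] at hle

lemma pCapacity_closedBall_le_shellCapacity (hp : (N : ℝ) < p) (x : EuclideanSpace ℝ (Fin N))
    {r R : ℝ} (hr : 0 < r) (hrR : r < R) :
    pCapacity p (closedBall x r) (ball x R) ≤ shellCapacity N p r R := by
  have hp1 := one_lt_of_natCast_lt hp
  have hρ := shellResistance_pos hp1 hp hr.le hrR
  have hlim : Tendsto (fun M ↦ N * volume.real (ball (0 : EuclideanSpace ℝ (Fin N)) 1) *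
      M ^ (1 - p)) (nhdsWithin (shellResistance N p r R) (Iio (shellResistance N p r R)))
      (nhds (shellCapacity N p r R)) :=
    tendsto_nhdsWithin_of_tendsto_nhds
      ((Real.continuousAt_rpow_const _ _ (Or.inl hρ.ne')).const_mul _)
  refine ge_of_tendsto hlim ?_
  filter_upwards [Ioo_mem_nhdsLT hρ] with M hM
  exact pCapacity_closedBall_le_of_lt_shellResistance hp1 x hr hrR hM.1 hM.2

lemma shellCapacity_zero_two_mul (hp : (N : ℝ) < p) {r : ℝ} (hr : 0 < r) :
    shellCapacity N p 0 (2 * r) =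
      superconformalThreshold N p * shellCapacity N p r (2 * r) := by
  have hp1 := one_lt_of_natCast_lt hp
  have hκ : 0 < (p - N) / (p - 1) := div_pos (by linarith) (by linarith)
  have hκp : (p - N) / (p - 1) * (1 - p) = N - p := by
    have : p - 1 ≠ 0 := by linarith
    field_simp
    ring
  have h2 : (0 : ℝ) < 2 ^ ((p - N) / (p - 1)) - 1 :=
    sub_pos.2 (Real.one_lt_rpow one_lt_two hκ)
  have hA : 0 < r ^ ((p - N) / (p - 1)) / ((p - N) / (p - 1)) := by positivity
  have hpoint : shellResistance N p 0 (2 * r) ^ (1 - p) =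
      2 ^ ((N : ℝ) - p) * (r ^ ((p - N) / (p - 1)) / ((p - N) / (p - 1))) ^ (1 - p) := by
    rw [shellResistance_eq hp1 hp, Real.zero_rpow hκ.ne', sub_zero,
      Real.mul_rpow zero_le_two hr.le, mul_div_assoc, Real.mul_rpow (by positivity) hA.le,
      ← Real.rpow_mul zero_le_two, hκp]
  have hball : shellResistance N p r (2 * r) ^ (1 - p) =
      ((2 ^ ((p - N) / (p - 1)) - 1) ^ (p - 1))⁻¹ *
        (r ^ ((p - N) / (p - 1)) / ((p - N) / (p - 1))) ^ (1 - p) := by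
    rw [shellResistance_eq hp1 hp, Real.mul_rpow zero_le_two hr.le, ← sub_one_mul, mul_div_assoc,
      Real.mul_rpow h2.le hA.le, ← Real.rpow_neg h2.le, neg_sub]
  have hC := (Real.rpow_pos_of_pos h2 (p - 1)).ne'
  rw [shellCapacity, shellCapacity, hpoint, hball, superconformalThreshold]
  field_simp

end Capacity

section Inradius

variable {N : ℕ} {p γ : ℝ} {Ω : Set (EuclideanSpace ℝ (Fin N))}

lemma isNegligible_of_closedBall_subset (hp : p ≠ 0) (hγ : 0 ≤ γ) {x : EuclideanSpace ℝ (Fin N)}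
    {r : ℝ} (h : closedBall x r ⊆ Ω) : IsNegligible p γ Ω x r := by
  rw [IsNegligible, sdiff_eq_empty.2 h, pCapacity_empty hp]
  exact mul_nonneg hγ (pCapacity_nonneg _ _ _)

lemma eInradius_le_capInradius (hp : p ≠ 0) (hγ : 0 ≤ γ) : eInradius Ω ≤ capInradius p γ Ω := by
  refine sSup_le ?_
  rintro ρ ⟨r, -, rfl, x, hx⟩
  refine le_of_forall_lt fun c hc ↦ ?_
  obtain ⟨s, hcs, hsr⟩ := ENNReal.lt_iff_exists_nnreal_btwn.1 hc
  have hs0 : (0 : ℝ) < s := by exact_mod_cast pos_of_gt hcs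
  have hsr' : (s : ℝ) < r := by
    simpa using (ENNReal.lt_ofReal_iff_toReal_lt ENNReal.coe_ne_top).1 hsr
  exact hcs.trans_le <| le_sSup ⟨s, hs0, ENNReal.ofReal_coe_nnreal.symm, x,
    isNegligible_of_closedBall_subset hp hγ ((closedBall_subset_ball hsr').trans hx)⟩

variable [NeZero N]

lemma closedBall_subset_of_isNegligible (hp : (N : ℝ) < p) (hγ0 : 0 ≤ γ)
    (hγ : γ < superconformalThreshold N p) {x : EuclideanSpace ℝ (Fin N)} {r : ℝ} (hr : 0 < r)
    (h : IsNegligible p γ Ω x r) : closedBall x r ⊆ Ω := by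
  intro y hy
  by_contra hyΩ
  have hr2 : r < 2 * r := by linarith
  have hlt : γ * shellCapacity N p r (2 * r) < shellCapacity N p 0 (2 * r) := by
    rw [shellCapacity_zero_two_mul hp hr]
    exact mul_lt_mul_of_pos_right hγ (shellCapacity_pos hp hr.le hr2)
  refine hlt.not_ge ?_
  calc shellCapacity N p 0 (2 * r)
      ≤ pCapacity p (closedBall x r \ Ω) (ball x (2 * r)) :=
        shellCapacity_zero_le_pCapacity hp hr hr2 sdiff_subset ⟨hy, hyΩ⟩
    _ ≤ γ * pCapacity p (closedBall x r) (ball x (2 * r)) := h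
    _ ≤ γ * shellCapacity N p r (2 * r) := by
        gcongr
        exact pCapacity_closedBall_le_shellCapacity hp x hr hr2

lemma capInradius_le_eInradius (hp : (N : ℝ) < p) (hγ0 : 0 ≤ γ)
    (hγ : γ < superconformalThreshold N p) : capInradius p γ Ω ≤ eInradius Ω := by
  refine sSup_le ?_
  rintro ρ ⟨r, hr, rfl, x, hx⟩
  exact le_sSup ⟨r, hr, rfl, x,
    ball_subset_closedBall.trans (closedBall_subset_of_isNegligible hp hγ0 hγ hr hx)⟩

end Inradius

end

theorem capInradius_eq_inradius_superconformal_general {N : ℕ} [NeZero N] {p γ : ℝ}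
    (hp : (N : ℝ) < p) (hγ0 : 0 ≤ γ)
    (hγ : γ < 2 ^ ((N : ℝ) - p) * (2 ^ ((p - (N : ℝ)) / (p - 1)) - 1) ^ (p - 1))
    (Ω : Set (EuclideanSpace ℝ (Fin N))) : capInradius p γ Ω = eInradius Ω :=
  le_antisymm (capInradius_le_eInradius hp hγ0 hγ)
    (eInradius_le_capInradius (zero_lt_one.trans (one_lt_of_natCast_lt hp)).ne' hγ0)

/-- In the superconformal range `p > N`, for every `0 ≤ γ` below the threshold
`γ₀ = 2^{N-p} (2^{(p-N)/(p-1)} - 1)^{p-1}`, the `(p,γ)`-capacitary inradius coincides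
with the classical inradius. -/
theorem capInradius_eq_inradius_superconformal (N : ℕ) (p γ : ℝ)
    (hN : 2 ≤ N) (hp : (N:ℝ) < p) (hγ0 : 0 ≤ γ)
    (hγ : γ < 2 ^ ((N:ℝ) - p) * (2 ^ ((p - (N:ℝ)) / (p - 1)) - 1) ^ (p - 1))
    (Ω : Set (EuclideanSpace ℝ (Fin N))) (hΩ : IsOpen Ω) :
    capInradius p γ Ω = eInradius Ω := by
  have : NeZero N := ⟨by omega⟩
  exact capInradius_eq_inradius_superconformal_general hp hγ0 hγ Ω
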